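/- arXiv:1503.04038 — 2 statements merged into one kernel-verified Lean document; each statement's English description precedes it below -/
import Mathlib

section
/- Fix positive real numbers α and β with αβ < 4. If f ∈ L¹(ℝ, ℂ) satisfies ∫_ℝ e^{iπαmt} f(t) dt = 0 for all m ∈ ℤ and ∫_ℝ e^{−iπβn/t} f(t) dt = 0 for all n ∈ ℤ, and f(t) = 0 for almost every t < 0, then f = 0 almost everywhere on ℝ. -/
open MeasureTheory Real

/-!
Put `p = 2 / α` and `q = 2 / β`, so that `p * q > 1`. The first condition says that the
`p`-periodization of `f` vanishes, the second that the `q`-periodization of the inverted density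
`g s = s⁻² f (1 / s)` does. As `f` lives on the positive half-axis, on `(0, p)` the term `f` of its
periodization is minus the sum of the later ones, so `‖f‖ ≤ T_p ‖g‖` on `(0, p)` and
`‖g‖ ≤ T_q ‖f‖` on `(0, q)`, with `T_p` the transfer operator of `y ↦ y⁻¹ mod p`.

A transfer operator does not increase the `L¹` norm, but since `p * q > 1` it sends the Gauss
density `ρ_q s = 1 / (q + s)` below `c ρ_p` with `c < 1`. Hence `φ M = ∫ (‖f‖ - M ρ_p)⁺` satisfies
`φ (c² M) ≤ φ M`. Iterating, `‖f‖₁ = φ 0 ≤ φ M` for every `M`, and `φ M → 0` as `M → ∞`, so `f = 0`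
on `(0, p)`. Likewise `g = 0` on `(0, q)`, that is `f = 0` on `(1 / q, ∞)`, and `1 / q < p`.
-/

open Set Filter Topology
open scoped ENNReal Pointwise

section Truncation

variable {X : Type*} [MeasurableSpace X] {μ : Measure X} {u ρ : X → ℝ≥0∞}

lemma continuous_lintegral_tsub_mul (hu : AEMeasurable u μ) (hu_fin : ∫⁻ x, u x ∂μ ≠ ∞)
    (hρ : AEMeasurable ρ μ) (hρ_top : ∀ᵐ x ∂μ, ρ x ≠ ∞) :
    Continuous fun M : ℝ≥0∞ ↦ ∫⁻ x, (u x - M * ρ x) ∂μ := by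
  refine continuous_iff_continuousAt.2 fun M ↦
    tendsto_lintegral_filter_of_dominated_convergence' u
      (.of_forall fun N ↦ hu.sub (hρ.const_mul N))
      (.of_forall fun N ↦ ae_of_all _ fun x ↦ tsub_le_self) hu_fin ?_
  filter_upwards [ae_lt_top' hu hu_fin, hρ_top] with x hux hρx
  exact ENNReal.Tendsto.sub tendsto_const_nhds ((ENNReal.continuous_mul_const hρx).tendsto M)
    (.inl hux.ne)

lemma ae_eq_zero_of_lintegral_tsub_mul_le (hu : AEMeasurable u μ) (hu_fin : ∫⁻ x, u x ∂μ ≠ ∞)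
    (hρ : AEMeasurable ρ μ) (hρ_top : ∀ᵐ x ∂μ, ρ x ≠ ∞) (hρ_zero : ∀ᵐ x ∂μ, ρ x ≠ 0)
    {c : ℝ≥0∞} (hc : c < 1)
    (h : ∀ M, ∫⁻ x, (u x - c * M * ρ x) ∂μ ≤ ∫⁻ x, (u x - M * ρ x) ∂μ) : u =ᵐ[μ] 0 := by
  set φ : ℝ≥0∞ → ℝ≥0∞ := fun M ↦ ∫⁻ x, (u x - M * ρ x) ∂μ
  have hφ : Continuous φ := continuous_lintegral_tsub_mul hu hu_fin hρ hρ_top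
  have hφ_pow (M : ℝ≥0∞) (n : ℕ) : φ (c ^ n * M) ≤ φ M := by
    induction n with
    | zero => rw [pow_zero, one_mul]
    | succ n ih => rw [pow_succ', mul_assoc]; exact (h _).trans ih
  have hφ_nat (N : ℕ) : φ 0 ≤ φ N := by
    have hpow : Tendsto (fun n : ℕ ↦ c ^ n * (N : ℝ≥0∞)) atTop (𝓝 0) := by
      simpa using ENNReal.Tendsto.mul_const
        (ENNReal.tendsto_pow_atTop_nhds_zero_of_lt_one hc) (.inr (ENNReal.natCast_ne_top N))
    exact le_of_tendsto' ((hφ.tendsto 0).comp hpow) (hφ_pow N)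
  have hφ_top : φ ∞ = 0 := by
    refine (lintegral_congr_ae ?_).trans lintegral_zero
    filter_upwards [hρ_zero] with x hx
    rw [ENNReal.top_mul hx, ENNReal.sub_top]
  have hφ_zero : φ 0 ≤ φ ∞ :=
    ge_of_tendsto' ((hφ.tendsto ∞).comp ENNReal.tendsto_nat_nhds_top) hφ_nat
  refine (lintegral_eq_zero_iff' hu).1 ?_
  simpa [φ, hφ_top] using hφ_zero

end Truncation

section Periodization

variable {T : ℝ}

lemma volume_eq_sum_map_add_zsmul (hT : 0 < T) :
    (volume : Measure ℝ) =
      Measure.sum fun n : ℤ ↦ (volume.restrict (Ioc 0 T)).map (· + n • T) := by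
  have hmap (n : ℤ) : (volume.restrict (Ioc 0 T)).map (· + n • T) =
      volume.restrict (Ioc (n • T) ((n + 1) • T)) := by
    have hpre : (· + n • T) ⁻¹' Ioc (n • T) ((n + 1) • T) = Ioc 0 T := by
      simp [add_smul]
    rw [← hpre]
    exact ((measurePreserving_add_right volume (n • T)).restrict_preimage measurableSet_Ioc).map_eq
  simp_rw [hmap]
  rw [← Measure.restrict_iUnion (pairwise_disjoint_Ioc_zsmul T) fun _ ↦ measurableSet_Ioc,
    iUnion_Ioc_zsmul hT, Measure.restrict_univ]

lemma lintegral_tsum_comp_add_zsmul (hT : 0 < T) {u : ℝ → ℝ≥0∞} (hu : AEMeasurable u) :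
    ∫⁻ x in Ioc 0 T, ∑' n : ℤ, u (x + n • T) = ∫⁻ x, u x := by
  conv_rhs => rw [volume_eq_sum_map_add_zsmul hT, lintegral_sum_measure]
  have hu_add (n : ℤ) : AEMeasurable (fun x ↦ u (x + n • T)) :=
    hu.comp_quasiMeasurePreserving
      (measurePreserving_add_right volume (n • T)).quasiMeasurePreserving
  rw [lintegral_tsum fun n ↦ (hu_add n).restrict]
  exact tsum_congr fun n ↦ ((measurableEmbedding_addRight (n • T)).lintegral_map _).symm

variable {E : Type*} [NormedAddCommGroup E]

lemma tsum_lintegral_enorm_comp_add_zsmul_ne_top (hT : 0 < T) {h : ℝ → E} (hh : Integrable h) :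
    ∑' n : ℤ, ∫⁻ x in Ioc 0 T, ‖h (x + n • T)‖ₑ ≠ ∞ := by
  rw [← lintegral_tsum fun n ↦ (hh.comp_add_right (n • T)).1.enorm.restrict,
    lintegral_tsum_comp_add_zsmul hT hh.1.enorm]
  exact hh.2.ne

variable [NormedSpace ℝ E]

lemma integral_tsum_comp_add_zsmul (hT : 0 < T) {h : ℝ → E} (hh : Integrable h) :
    ∫ x in Ioc 0 T, ∑' n : ℤ, h (x + n • T) = ∫ x, h x := by
  have hsum := hh
  rw [volume_eq_sum_map_add_zsmul hT] at hsum
  conv_rhs => rw [volume_eq_sum_map_add_zsmul hT, integral_sum_measure hsum]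
  rw [integral_tsum (fun n ↦ (hh.comp_add_right (n • T)).1.restrict)
    (tsum_lintegral_enorm_comp_add_zsmul_ne_top hT hh)]
  exact tsum_congr fun n ↦ ((measurableEmbedding_addRight (n • T)).integral_map _).symm

end Periodization

section TsumIntegrable
variable {X ι E : Type*} [MeasurableSpace X] {μ : Measure X} [Countable ι]
  [NormedAddCommGroup E] [CompleteSpace E] {F : ι → X → E}

lemma ae_summable_of_tsum_lintegral_enorm_ne_top (hF : ∀ i, AEStronglyMeasurable (F i) μ)
    (hF_fin : ∑' i, ∫⁻ x, ‖F i x‖ₑ ∂μ ≠ ∞) : ∀ᵐ x ∂μ, Summable fun i ↦ F i x := by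
  rw [← lintegral_tsum fun i ↦ (hF i).enorm] at hF_fin
  filter_upwards [ae_lt_top' (.tsum fun i ↦ (hF i).enorm) hF_fin] with x hx
  exact .of_norm (by simpa using ENNReal.summable_toReal hx.ne)

lemma integrable_tsum_of_tsum_lintegral_enorm_ne_top (hF : ∀ i, AEStronglyMeasurable (F i) μ)
    (hF_fin : ∑' i, ∫⁻ x, ‖F i x‖ₑ ∂μ ≠ ∞) : Integrable (fun x ↦ ∑' i, F i x) μ := by
  refine ⟨aestronglyMeasurable_of_tendsto_ae (atTop : Filter (Finset ι))
    (fun s ↦ Finset.aestronglyMeasurable_fun_sum s fun i _ ↦ hF i) ?_, ?_⟩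
  · filter_upwards [ae_summable_of_tsum_lintegral_enorm_ne_top hF hF_fin] with x hx
    exact hx.hasSum
  · calc ∫⁻ x, ‖∑' i, F i x‖ₑ ∂μ ≤ ∫⁻ x, ∑' i, ‖F i x‖ₑ ∂μ :=
          lintegral_mono fun x ↦ enorm_tsum_le_tsum_enorm
      _ = ∑' i, ∫⁻ x, ‖F i x‖ₑ ∂μ := lintegral_tsum fun i ↦ (hF i).enorm
      _ < ∞ := hF_fin.lt_top

end TsumIntegrable

section Fourier

variable {T : ℝ} [Fact (0 < T)] {E : Type*} [NormedAddCommGroup E] [NormedSpace ℂ E]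

lemma integrable_continuousMap_smul {X : Type*} [MeasurableSpace X] {μ : Measure X}
    {p : X → AddCircle T} (hp : Measurable p) {h : X → E} (hh : Integrable h μ)
    (φ : C(AddCircle T, ℂ)) : Integrable (fun x ↦ φ (p x) • h x) μ :=
  hh.bdd_smul _ (φ.continuous.measurable.comp hp).aestronglyMeasurable
    (ae_of_all _ fun _ ↦ φ.norm_coe_le_norm _)

lemma integral_continuousMap_smul_eq_zero {X : Type*} [MeasurableSpace X] {μ : Measure X}
    {p : X → AddCircle T} (hp : Measurable p) {h : X → E} (hh : Integrable h μ)
    (hF : ∀ m : ℤ, ∫ x, fourier m (p x) • h x ∂μ = 0) (φ : C(AddCircle T, ℂ)) :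
    ∫ x, φ (p x) • h x ∂μ = 0 := by
  let Λ : C(AddCircle T, ℂ) →L[ℂ] E := LinearMap.mkContinuous
    { toFun ψ := ∫ x, ψ (p x) • h x ∂μ
      map_add' ψ χ := by
        simp only [ContinuousMap.add_apply, add_smul]
        exact integral_add (integrable_continuousMap_smul hp hh ψ)
          (integrable_continuousMap_smul hp hh χ)
      map_smul' c ψ := by
        simp only [ContinuousMap.smul_apply, smul_assoc, RingHom.id_apply]
        exact integral_smul c _ }
    (∫ x, ‖h x‖ ∂μ) fun ψ ↦ by
      rw [mul_comm, ← integral_const_mul]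
      refine norm_integral_le_of_norm_le (hh.norm.const_mul _) (ae_of_all _ fun x ↦ ?_)
      rw [norm_smul]
      gcongr
      exact ψ.norm_coe_le_norm _
  have hspan : (Submodule.span ℂ (range (@fourier T))).topologicalClosure ≤ Λ.ker :=
    Submodule.topologicalClosure_minimal _ (Submodule.span_le.2 (range_subset_iff.2 hF))
      Λ.isClosed_ker
  rw [span_fourier_closure_eq_top] at hspan
  exact hspan (Submodule.mem_top (x := φ))

variable [CompleteSpace E]

lemma integral_smul_tsum_comp_add_zsmul {h : ℝ → E} (hh : Integrable h)
    (φ : C(AddCircle T, ℂ)) :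
    ∫ x in Ioc 0 T, φ (x : AddCircle T) • ∑' n : ℤ, h (x + n • T) =
      ∫ x : ℝ, φ (x : AddCircle T) • h x := by
  have hT : 0 < T := Fact.out
  rw [← integral_tsum_comp_add_zsmul hT
    (integrable_continuousMap_smul AddCircle.measurable_mk' hh φ)]
  refine integral_congr_ae ?_
  filter_upwards [ae_summable_of_tsum_lintegral_enorm_ne_top
    (fun n : ℤ ↦ (hh.comp_add_right (n • T)).1.restrict)
    (tsum_lintegral_enorm_comp_add_zsmul_ne_top hT hh)] with x hx
  rw [← hx.tsum_const_smul]
  exact tsum_congr fun n ↦ by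
    rw [AddCircle.coe_add, AddCircle.coe_zsmul, AddCircle.coe_period, smul_zero, add_zero]

lemma ae_hasSum_comp_add_zsmul_zero {h : ℝ → E} (hh : Integrable h)
    (hF : ∀ m : ℤ, ∫ t : ℝ, fourier m (t : AddCircle T) • h t = 0) :
    ∀ᵐ x, x ∈ Ioo 0 T → HasSum (fun n : ℤ ↦ h (x + n • T)) 0 := by
  have hT : 0 < T := Fact.out
  have hmeas (n : ℤ) : AEStronglyMeasurable (fun x ↦ h (x + n • T)) (volume.restrict (Ioc 0 T)) :=
    (hh.comp_add_right (n • T)).1.restrict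
  have hfin := tsum_lintegral_enorm_comp_add_zsmul_ne_top hT hh
  have hint : IntegrableOn (fun x ↦ ∑' n : ℤ, h (x + n • T)) (Ioo 0 T) :=
    IntegrableOn.mono_set (integrable_tsum_of_tsum_lintegral_enorm_ne_top hmeas hfin)
      Ioo_subset_Ioc_self
  have hzero : ∀ᵐ x, x ∈ Ioo 0 T → ∑' n : ℤ, h (x + n • T) = 0 := by
    refine isOpen_Ioo.ae_eq_zero_of_integral_contDiff_smul_eq_zero hint.locallyIntegrableOn
      fun g hg _ hgs ↦ ?_
    have hg_zero {x : ℝ} (hx : x ∉ Ioo 0 T) : g x = 0 :=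
      image_eq_zero_of_notMem_tsupport fun h ↦ hx (hgs h)
    let φ : C(AddCircle T, ℂ) := ⟨AddCircle.liftIco T 0 fun x ↦ (g x : ℂ),
      AddCircle.liftIco_zero_continuous (by simp [hg_zero])
        (Complex.continuous_ofReal.comp hg.continuous).continuousOn⟩
    have hφ {x : ℝ} (hx : x ∈ Ioo 0 T) : φ (x : AddCircle T) = g x :=
      AddCircle.liftIco_zero_coe_apply (f := fun x ↦ (g x : ℂ)) (Ioo_subset_Ico_self hx)
    calc ∫ x, g x • ∑' n : ℤ, h (x + n • T)
        = ∫ x in Ioo 0 T, g x • ∑' n : ℤ, h (x + n • T) :=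
          (setIntegral_eq_integral_of_forall_compl_eq_zero
            fun x hx ↦ by rw [hg_zero hx, zero_smul]).symm
      _ = ∫ x in Ioc 0 T, φ (x : AddCircle T) • ∑' n : ℤ, h (x + n • T) := by
          rw [integral_Ioc_eq_integral_Ioo]
          exact setIntegral_congr_fun measurableSet_Ioo fun x hx ↦ by
            simp only [hφ hx, Complex.coe_smul]
      _ = ∫ x : ℝ, φ (x : AddCircle T) • h x := integral_smul_tsum_comp_add_zsmul hh φ
      _ = 0 := integral_continuousMap_smul_eq_zero AddCircle.measurable_mk' hh hF φ
  filter_upwards [hzero, ae_imp_of_ae_restrict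
    (ae_summable_of_tsum_lintegral_enorm_ne_top hmeas hfin)] with x hx hx_sum hxI
  exact hx hxI ▸ (hx_sum (Ioo_subset_Ioc_self hxI)).hasSum

end Fourier

lemma enorm_le_tsum_enorm_succ_of_hasSum_zero {E : Type*} [NormedAddCommGroup E] {a : ℤ → E}
    (ha : HasSum a 0) (ha_neg : ∀ n < 0, a n = 0) :
    ‖a 0‖ₑ ≤ ∑' k : ℕ, ‖a (k + 1)‖ₑ := by
  have hnat : HasSum (fun k : ℕ ↦ a k) 0 :=
    (Nat.cast_injective.hasSum_iff fun n hn ↦ ha_neg n (by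
      by_contra! hn0
      exact hn ⟨n.toNat, Int.toNat_of_nonneg hn0⟩)).2 ha
  have hsucc : HasSum (fun k : ℕ ↦ a (k + 1)) (-a 0) := by
    simpa using (hasSum_nat_add_iff' 1).2 hnat
  calc ‖a 0‖ₑ = ‖∑' k : ℕ, a (k + 1)‖ₑ := by rw [hsucc.tsum_eq, enorm_neg]
    _ ≤ _ := enorm_tsum_le_tsum_enorm

section Inversion

lemma quasiMeasurePreserving_real_inv :
    Measure.QuasiMeasurePreserving (fun x : ℝ ↦ x⁻¹) volume volume := by
  refine ⟨measurable_inv, .mk fun s hs hs_null ↦ ?_⟩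
  rw [Measure.map_apply measurable_inv hs]
  have hnull : volume (Inv.inv '' (s \ {(0 : ℝ)})) = 0 :=
    addHaar_image_eq_zero_of_differentiableOn_of_addHaar_eq_zero volume
      (differentiableOn_inv.mono fun x hx ↦ hx.2) (measure_mono_null sdiff_subset hs_null)
  refine measure_mono_null (t := insert 0 (Inv.inv '' (s \ {(0 : ℝ)}))) (fun x hx ↦ ?_)
    (by rw [insert_eq, measure_union_null_iff]; exact ⟨measure_singleton 0, hnull⟩)
  rcases eq_or_ne x 0 with rfl | hx0
  · exact mem_insert _ _
  · exact .inr ⟨x⁻¹, ⟨hx, inv_ne_zero hx0⟩, inv_inv x⟩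

lemma setLIntegral_inv {s : Set ℝ} (hs : MeasurableSet s) (hs0 : (0 : ℝ) ∉ s) (v : ℝ → ℝ≥0∞) :
    ∫⁻ y in s⁻¹, v y = ∫⁻ y in s, ENNReal.ofReal (y ^ 2)⁻¹ * v y⁻¹ := by
  rw [← image_inv_eq_inv, lintegral_image_eq_lintegral_abs_deriv_mul hs
    (fun y hy ↦ (hasDerivAt_inv (ne_of_mem_of_not_mem hy hs0)).hasDerivWithinAt)
    inv_injective.injOn]
  simp

variable {E : Type*} [NormedAddCommGroup E] [NormedSpace ℝ E] {f : ℝ → E}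

/-- The density of the pushforward of `f(t) dt` under the inversion `t ↦ 1 / t`. -/
noncomputable def inversionDensity (f : ℝ → E) (s : ℝ) : E := (s ^ 2)⁻¹ • f s⁻¹

lemma inversionDensity_inversionDensity {s : ℝ} (hs : s ≠ 0) :
    inversionDensity (inversionDensity f) s = f s := by
  rw [inversionDensity, inversionDensity, smul_smul, inv_inv, inv_pow, inv_inv,
    inv_mul_cancel₀ (pow_ne_zero 2 hs), one_smul]

lemma enorm_inversionDensity (s : ℝ) :
    ‖inversionDensity f s‖ₑ = ENNReal.ofReal (s ^ 2)⁻¹ * ‖f s⁻¹‖ₑ := by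
  rw [inversionDensity, enorm_smul, Real.enorm_of_nonneg (by positivity)]

lemma integrable_inversionDensity (hf : Integrable f) : Integrable (inversionDensity f) := by
  change Integrable fun s ↦ (s ^ 2)⁻¹ • f s⁻¹
  have h := integrableOn_image_iff_integrableOn_abs_deriv_smul (measurableSet_singleton 0).compl
    (fun x hx ↦ (hasDerivAt_inv hx).hasDerivWithinAt) inv_injective.injOn f
  simpa [IntegrableOn] using h.1 hf.integrableOn

lemma integral_inversionDensity (f : ℝ → E) : ∫ s, inversionDensity f s = ∫ t, f t := by
  have h := integral_image_eq_integral_abs_deriv_smul (measurableSet_singleton 0).compl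
    (fun x hx ↦ (hasDerivAt_inv hx).hasDerivWithinAt) inv_injective.injOn f
  simpa [inversionDensity] using h.symm

end Inversion

section GaussTransfer

lemma tsum_ofReal_sub_succ_le {f : ℕ → ℝ} (hf : Antitone f) (hf_nonneg : ∀ n, 0 ≤ f n) :
    ∑' k, ENNReal.ofReal (f k - f (k + 1)) ≤ ENNReal.ofReal (f 0) := by
  refine ENNReal.tsum_le_of_sum_range_le fun n ↦ ?_
  rw [← ENNReal.ofReal_sum_of_nonneg fun k _ ↦ sub_nonneg.2 (hf k.le_succ),
    Finset.sum_range_sub']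
  exact ENNReal.ofReal_le_ofReal (sub_le_self _ (hf_nonneg n))

/-- The transfer operator of the Gauss-type map `y ↦ y⁻¹ mod p`, from densities on `(0, p⁻¹)` to
densities on `(0, p)`: its inverse branches are `x ↦ (x + (k + 1) p)⁻¹`. -/
noncomputable def gaussTransfer (p : ℝ) (v : ℝ → ℝ≥0∞) (x : ℝ) : ℝ≥0∞ :=
  ∑' k : ℕ, ENNReal.ofReal ((x + (k + 1) * p) ^ 2)⁻¹ * v (x + (k + 1) * p)⁻¹

/-- The Gauss density `1 / (p + x)` on `(0, p)`, without normalization. -/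
noncomputable def gaussDensity (p x : ℝ) : ℝ≥0∞ := ENNReal.ofReal (p + x)⁻¹

variable {p q : ℝ}

lemma measurable_gaussDensity : Measurable (gaussDensity p) := by
  unfold gaussDensity; fun_prop

lemma gaussDensity_ne_top (x : ℝ) : gaussDensity p x ≠ ∞ := ENNReal.ofReal_ne_top

lemma gaussDensity_ne_zero (hp : 0 < p) {x : ℝ} (hx : 0 < x) : gaussDensity p x ≠ 0 := by
  rw [gaussDensity, ENNReal.ofReal_ne_zero_iff]
  positivity

lemma lt_add_succ_mul (hp : 0 < p) {x : ℝ} (hx : 0 < x) (k : ℕ) : p < x + (k + 1) * p := by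
  nlinarith [(k.cast_nonneg : (0 : ℝ) ≤ k)]

lemma gaussTransfer_mono (hp : 0 < p) {u v : ℝ → ℝ≥0∞} (h : ∀ y ∈ Ioo 0 p⁻¹, u y ≤ v y) {x : ℝ}
    (hx : 0 < x) : gaussTransfer p u x ≤ gaussTransfer p v x := by
  refine ENNReal.tsum_le_tsum fun k ↦ ?_
  gcongr
  have hlt := lt_add_succ_mul hp hx k
  exact h _ ⟨inv_pos.2 (hp.trans hlt), inv_strictAnti₀ hp hlt⟩

lemma gaussTransfer_const_mul_add (M : ℝ≥0∞) (u v : ℝ → ℝ≥0∞) (x : ℝ) :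
    gaussTransfer p (fun y ↦ M * u y + v y) x = M * gaussTransfer p u x + gaussTransfer p v x := by
  simp only [gaussTransfer, mul_add, ENNReal.tsum_add, ← ENNReal.tsum_mul_left, mul_left_comm]

-- At `p * q = 1` this is an equality, the invariance of the Gauss density in telescoping form.
lemma inv_sq_mul_inv_add_inv_le (hp : 0 < p) (hpq : 1 ≤ p * q) {y : ℝ} (hy : p ≤ y) :
    (y ^ 2)⁻¹ * (q + y⁻¹)⁻¹ ≤ 2 / (1 + p * q) * (y⁻¹ - (y + p)⁻¹) := by
  have hy0 : 0 < y := hp.trans_le hy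
  have hq : 0 < q := pos_of_mul_pos_right (by linarith) hp.le
  have hl : (y ^ 2)⁻¹ * (q + y⁻¹)⁻¹ = (y * (q * y + 1))⁻¹ := by field_simp
  have hr : 2 / (1 + p * q) * (y⁻¹ - (y + p)⁻¹) = 2 * p / ((1 + p * q) * (y * (y + p))) := by
    field_simp; ring
  rw [hl, hr, inv_eq_one_div, div_le_div_iff₀ (by positivity) (by positivity)]
  have hkey : 0 ≤ y * ((p * q - 1) * (y - p)) :=
    mul_nonneg hy0.le (mul_nonneg (by linarith) (by linarith))
  linarith

lemma gaussTransfer_gaussDensity_le (hp : 0 < p) (hpq : 1 ≤ p * q) {x : ℝ} (hx : 0 < x) :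
    gaussTransfer p (gaussDensity q) x ≤ ENNReal.ofReal (2 / (1 + p * q)) * gaussDensity p x := by
  set r : ℕ → ℝ := fun k ↦ (x + (k + 1) * p)⁻¹ with hr
  have hr_anti : Antitone r := fun k l hkl ↦ by simp only [hr]; gcongr
  have hr_zero : r 0 = (p + x)⁻¹ := by simp [hr, add_comm]
  calc gaussTransfer p (gaussDensity q) x
      ≤ ∑' k, ENNReal.ofReal (2 / (1 + p * q)) * ENNReal.ofReal (r k - r (k + 1)) := by
        refine ENNReal.tsum_le_tsum fun k ↦ ?_
        have hsucc : r (k + 1) = (x + (k + 1) * p + p)⁻¹ := by simp only [hr]; push_cast; ring_nf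
        rw [gaussDensity, hsucc, ← ENNReal.ofReal_mul (by positivity),
          ← ENNReal.ofReal_mul (by positivity)]
        exact ENNReal.ofReal_le_ofReal
          (inv_sq_mul_inv_add_inv_le hp hpq (lt_add_succ_mul hp hx k).le)
    _ ≤ ENNReal.ofReal (2 / (1 + p * q)) * gaussDensity p x := by
        rw [ENNReal.tsum_mul_left, gaussDensity, ← hr_zero]
        gcongr
        exact tsum_ofReal_sub_succ_le hr_anti fun k ↦ by positivity

lemma lintegral_gaussTransfer_le (hp : 0 < p) {v : ℝ → ℝ≥0∞} (hv : AEMeasurable v) :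
    ∫⁻ x in Ioo 0 p, gaussTransfer p v x ≤ ∫⁻ y in Ioo 0 p⁻¹, v y := by
  set w : ℝ → ℝ≥0∞ := (Ioi p).indicator fun y ↦ ENNReal.ofReal (y ^ 2)⁻¹ * v y⁻¹ with hw
  have hw_meas : AEMeasurable w :=
    ((by fun_prop : Measurable fun y : ℝ ↦ ENNReal.ofReal (y ^ 2)⁻¹).aemeasurable.mul
      (hv.comp_quasiMeasurePreserving quasiMeasurePreserving_real_inv)).indicator measurableSet_Ioi
  have hle {x : ℝ} (hx : 0 < x) : gaussTransfer p v x ≤ ∑' n : ℤ, w (x + n • p) := by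
    have hinj : Function.Injective fun k : ℕ ↦ (k + 1 : ℤ) := fun k l h ↦ by simpa using h
    refine le_of_eq_of_le (tsum_congr fun k ↦ ?_)
      (ENNReal.tsum_comp_le_tsum_of_injective hinj fun n : ℤ ↦ w (x + n • p))
    simp [hw, lt_add_succ_mul hp hx k]
  calc ∫⁻ x in Ioo 0 p, gaussTransfer p v x
      ≤ ∫⁻ x in Ioo 0 p, ∑' n : ℤ, w (x + n • p) :=
        setLIntegral_mono' measurableSet_Ioo fun x hx ↦ hle hx.1
    _ ≤ ∫⁻ x in Ioc 0 p, ∑' n : ℤ, w (x + n • p) := lintegral_mono_set Ioo_subset_Ioc_self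
    _ = ∫⁻ y in Ioi p, ENNReal.ofReal (y ^ 2)⁻¹ * v y⁻¹ := by
        rw [lintegral_tsum_comp_add_zsmul hp hw_meas, lintegral_indicator measurableSet_Ioi]
    _ = ∫⁻ y in Ioo 0 p⁻¹, v y := by
        rw [← setLIntegral_inv measurableSet_Ioi (by simpa using hp.le), inv_Ioi₀ hp]

lemma lintegral_tsub_gaussDensity_le_of_le_gaussTransfer (hp : 0 < p) (hpq : 1 ≤ p * q)
    {a b : ℝ → ℝ≥0∞} (hb : AEMeasurable b) (hab : ∀ᵐ x, x ∈ Ioo 0 p → a x ≤ gaussTransfer p b x)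
    (M : ℝ≥0∞) :
    ∫⁻ x in Ioo 0 p, (a x - ENNReal.ofReal (2 / (1 + p * q)) * M * gaussDensity p x) ≤
      ∫⁻ y in Ioo 0 q, (b y - M * gaussDensity q y) := by
  set c := ENNReal.ofReal (2 / (1 + p * q))
  have hb_le (x : ℝ) (hx : 0 < x) : gaussTransfer p b x ≤
      M * (c * gaussDensity p x) + gaussTransfer p (fun y ↦ b y - M * gaussDensity q y) x :=
    calc gaussTransfer p b x
        ≤ gaussTransfer p (fun y ↦ M * gaussDensity q y + (b y - M * gaussDensity q y)) x :=
          gaussTransfer_mono hp (fun y _ ↦ le_add_tsub) hx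
      _ ≤ _ := by
          rw [gaussTransfer_const_mul_add]
          gcongr
          exact gaussTransfer_gaussDensity_le hp hpq hx
  calc ∫⁻ x in Ioo 0 p, (a x - c * M * gaussDensity p x)
      ≤ ∫⁻ x in Ioo 0 p, gaussTransfer p (fun y ↦ b y - M * gaussDensity q y) x := by
        refine setLIntegral_mono_ae' measurableSet_Ioo ?_
        filter_upwards [hab] with x hx hxI
        rw [tsub_le_iff_left, mul_comm c M, mul_assoc]
        exact (hx hxI).trans (hb_le x hxI.1)
    _ ≤ ∫⁻ y in Ioo 0 p⁻¹, (b y - M * gaussDensity q y) :=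
        lintegral_gaussTransfer_le hp (hb.sub (measurable_gaussDensity.const_mul M).aemeasurable)
    _ ≤ ∫⁻ y in Ioo 0 q, (b y - M * gaussDensity q y) :=
        lintegral_mono_set (Ioo_subset_Ioo_right (by rwa [inv_le_iff_one_le_mul₀' hp]))

lemma ae_eq_zero_of_le_gaussTransfer (hp : 0 < p) (hpq : 1 < p * q) {a b : ℝ → ℝ≥0∞}
    (ha : AEMeasurable a) (hb : AEMeasurable b) (ha_fin : ∫⁻ x, a x ≠ ∞)
    (hab : ∀ᵐ x, x ∈ Ioo 0 p → a x ≤ gaussTransfer p b x)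
    (hba : ∀ᵐ y, y ∈ Ioo 0 q → b y ≤ gaussTransfer q a y) : ∀ᵐ x, x ∈ Ioo 0 p → a x = 0 := by
  have hq : 0 < q := pos_of_mul_pos_right (by linarith) hp.le
  set c := ENNReal.ofReal (2 / (1 + p * q)) with hc_def
  have hc : c < 1 := by
    rw [hc_def, ENNReal.ofReal_lt_one, div_lt_one (by linarith)]
    linarith
  have hstep (M : ℝ≥0∞) : ∫⁻ x in Ioo 0 p, (a x - c * c * M * gaussDensity p x) ≤
      ∫⁻ x in Ioo 0 p, (a x - M * gaussDensity p x) := by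
    have h₁ := lintegral_tsub_gaussDensity_le_of_le_gaussTransfer hp hpq.le hb hab (c * M)
    have h₂ := lintegral_tsub_gaussDensity_le_of_le_gaussTransfer hq (mul_comm p q ▸ hpq.le) ha
      hba M
    rw [← hc_def, ← mul_assoc] at h₁
    rw [mul_comm q p] at h₂
    exact h₁.trans h₂
  exact ae_imp_of_ae_restrict <| ae_eq_zero_of_lintegral_tsub_mul_le ha.restrict
    (ne_top_of_le_ne_top ha_fin (setLIntegral_le_lintegral _ _))
    measurable_gaussDensity.aemeasurable (ae_of_all _ gaussDensity_ne_top)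
    (ae_restrict_of_forall_mem measurableSet_Ioo fun x hx ↦ gaussDensity_ne_zero hp hx.1)
    (mul_lt_one_of_lt_of_le hc hc.le) hstep

end GaussTransfer

section Hyperbola

variable {p q : ℝ} {E : Type*} [NormedAddCommGroup E] [NormedSpace ℂ E]

lemma integral_fourier_smul_inversionDensity (f : ℝ → E) (n : ℤ) :
    ∫ s : ℝ, fourier n (s : AddCircle p) • inversionDensity f s =
      ∫ t : ℝ, fourier n ((t⁻¹ : ℝ) : AddCircle p) • f t := by
  rw [← integral_inversionDensity fun t : ℝ ↦ fourier n ((t⁻¹ : ℝ) : AddCircle p) • f t]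
  refine integral_congr_ae (ae_of_all _ fun s ↦ ?_)
  simp only [inversionDensity, inv_inv, smul_comm (fourier n (s : AddCircle p)) (s ^ 2)⁻¹]

variable [Fact (0 < p)] [CompleteSpace E] {f : ℝ → E}

lemma enorm_le_gaussTransfer_inversionDensity (hf : Integrable f)
    (hF : ∀ m : ℤ, ∫ t : ℝ, fourier m (t : AddCircle p) • f t = 0)
    (hneg : ∀ᵐ t : ℝ, t < 0 → f t = 0) :
    ∀ᵐ x, x ∈ Ioo 0 p → ‖f x‖ₑ ≤ gaussTransfer p (fun s ↦ ‖inversionDensity f s‖ₑ) x := by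
  have hneg_add : ∀ᵐ x, ∀ n : ℤ, x + n • p < 0 → f (x + n • p) = 0 := ae_all_iff.2 fun n ↦
    (measurePreserving_add_right volume (n • p)).quasiMeasurePreserving.ae hneg
  filter_upwards [ae_hasSum_comp_add_zsmul_zero hf hF, hneg_add] with x hx hx_neg hxI
  have hp : 0 < p := Fact.out
  have hvanish (n : ℤ) (hn : n < 0) : f (x + n • p) = 0 := by
    refine hx_neg n ?_
    have hn' : (n : ℝ) ≤ -1 := by exact_mod_cast Int.le_sub_one_of_lt hn
    rw [zsmul_eq_mul]
    nlinarith [hxI.2]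
  calc ‖f x‖ₑ = ‖f (x + (0 : ℤ) • p)‖ₑ := by rw [zero_smul, add_zero]
    _ ≤ ∑' k : ℕ, ‖f (x + (k + 1 : ℤ) • p)‖ₑ :=
        enorm_le_tsum_enorm_succ_of_hasSum_zero (hx hxI) hvanish
    _ = gaussTransfer p (fun s ↦ ‖inversionDensity f s‖ₑ) x := tsum_congr fun k ↦ by
        have hpos : 0 < x + (k + 1) * p := add_pos hxI.1 (by positivity)
        rw [← enorm_inversionDensity, inversionDensity_inversionDensity hpos.ne']
        push_cast [zsmul_eq_mul]
        rfl

variable [Fact (0 < q)]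

lemma ae_eq_zero_of_integral_fourier_eq_zero (hpq : 1 < p * q) (hf : Integrable f)
    (hp : ∀ m : ℤ, ∫ t : ℝ, fourier m (t : AddCircle p) • f t = 0)
    (hq : ∀ n : ℤ, ∫ t : ℝ, fourier n ((t⁻¹ : ℝ) : AddCircle q) • f t = 0)
    (hneg : ∀ᵐ t : ℝ, t < 0 → f t = 0) :
    f =ᵐ[volume] 0 := by
  set g := inversionDensity f
  have hg : Integrable g := integrable_inversionDensity hf
  have hg_neg : ∀ᵐ s : ℝ, s < 0 → g s = 0 := by
    filter_upwards [quasiMeasurePreserving_real_inv.ae hneg] with s hs hs0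
    simp only [g, inversionDensity, hs (inv_lt_zero.2 hs0), smul_zero]
  have hfg : ∀ᵐ x, x ∈ Ioo 0 p → ‖f x‖ₑ ≤ gaussTransfer p (fun s ↦ ‖g s‖ₑ) x :=
    enorm_le_gaussTransfer_inversionDensity hf hp hneg
  have hgf : ∀ᵐ s, s ∈ Ioo 0 q → ‖g s‖ₑ ≤ gaussTransfer q (fun x ↦ ‖f x‖ₑ) s := by
    filter_upwards [enorm_le_gaussTransfer_inversionDensity hg
      (fun n ↦ (integral_fourier_smul_inversionDensity f n).trans (hq n)) hg_neg] with s hs hsI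
    refine (hs hsI).trans (gaussTransfer_mono Fact.out (fun x hx ↦ ?_) hsI.1)
    rw [inversionDensity_inversionDensity hx.1.ne']
  have hf_zero := ae_eq_zero_of_le_gaussTransfer Fact.out hpq hf.1.enorm hg.1.enorm hf.2.ne hfg hgf
  have hg_zero := ae_eq_zero_of_le_gaussTransfer Fact.out (mul_comm p q ▸ hpq) hg.1.enorm
    hf.1.enorm hg.2.ne hgf hfg
  filter_upwards [hneg, hf_zero, quasiMeasurePreserving_real_inv.ae hg_zero,
    Measure.ae_ne volume 0] with t ht_neg ht_f ht_g ht0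
  rcases ht0.lt_or_gt with ht | ht
  · exact ht_neg ht
  rcases lt_or_ge t p with htp | htp
  · exact enorm_eq_zero.1 (ht_f ⟨ht, htp⟩)
  · have ht_inv : t⁻¹ < q := by
      rw [inv_lt_iff_one_lt_mul₀' ht]
      exact hpq.trans_le (mul_le_mul_of_nonneg_right htp (Fact.out : 0 < q).le)
    have hgt : g t⁻¹ = 0 := enorm_eq_zero.1 (ht_g ⟨inv_pos.2 ht, ht_inv⟩)
    calc f t = inversionDensity g t := (inversionDensity_inversionDensity ht.ne').symm
      _ = 0 := by rw [inversionDensity, hgt, smul_zero]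

end Hyperbola

lemma fourier_coe_two_div (c x : ℝ) (n : ℤ) :
    fourier n (x : AddCircle (2 / c)) = Complex.exp (Complex.I * π * c * n * x) := by
  rw [fourier_coe_apply]
  congr 1
  push_cast
  field_simp

theorem stmt_4_general {E : Type*} [NormedAddCommGroup E] [NormedSpace ℂ E] [CompleteSpace E]
    {α β : ℝ} (hα : 0 < α) (hβ : 0 < β) (hsub : α * β < 4) {f : ℝ → E} (hf : Integrable f)
    (h1 : ∀ m : ℤ, ∫ t : ℝ, Complex.exp (Complex.I * π * α * m * t) • f t = 0)
    (h2 : ∀ n : ℤ, ∫ t : ℝ, Complex.exp (-(Complex.I * π * β * n) / t) • f t = 0)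
    (hneg : ∀ᵐ t : ℝ, t < 0 → f t = 0) :
    f =ᵐ[volume] 0 := by
  have : Fact (0 < 2 / α) := ⟨by positivity⟩
  have : Fact (0 < 2 / β) := ⟨by positivity⟩
  have hpq : 1 < 2 / α * (2 / β) := by
    rw [div_mul_div_comm, one_lt_div (mul_pos hα hβ)]
    linarith
  refine ae_eq_zero_of_integral_fourier_eq_zero hpq hf (fun m ↦ ?_) (fun n ↦ ?_) hneg
  · simpa only [fourier_coe_two_div] using h1 m
  · simpa only [fourier_coe_two_div, Int.cast_neg, mul_neg, neg_neg, div_eq_mul_inv,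
      Complex.ofReal_inv] using h2 (-n)

/-- Dynamical unique continuation: for `αβ < 4`, an annihilating `L¹` density
on the full hyperbola vanishing a.e. on the negative half-axis vanishes
identically. -/
theorem stmt_4 (α β : ℝ) (hα : 0 < α) (hβ : 0 < β) (hsub : α * β < 4)
    (f : ℝ → ℂ) (hf : Integrable f)
    (h1 : ∀ m : ℤ, ∫ t : ℝ, Complex.exp (Complex.I * π * α * m * t) * f t = 0)
    (h2 : ∀ n : ℤ, ∫ t : ℝ, Complex.exp (-(Complex.I * π * β * n) / t) * f t = 0)
    (hneg : ∀ᵐ t : ℝ, t < 0 → f t = 0) :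
    f =ᵐ[volume] 0 :=
  stmt_4_general hα hβ hsub hf h1 h2 hneg
end

section
/- For each ε > 0 and x ∈ ℝ, the integral G_ε(x) := (1/(2π)) ∫_ℝ e^{i/t + itx − ε|t|} dt converges absolutely. Let B(x) := ∑_{j=0}^∞ (−1)^j x^j / (j!·(j+1)!) for x ≥ 0 (so that B(x) = x^{−1/2} J₁(2√x), with J₁ the Bessel function). Then for every compactly supported C^∞ function φ : ℝ → ℂ, lim_{ε→0⁺} ∫_ℝ G_ε(x) φ(x) dx = φ(0) − ∫₀^∞ B(x) φ(x) dx. -/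
open MeasureTheory Real Filter

/-!
The Laplace transform of `B` is computed termwise: `∫₀^∞ B(x) e^{-zx} dx = 1 - e^{-1/z}` for
`Re z > 0`. On the line `z = η + 2πis` this says that the Fourier transform of the damped function
`B(x) e^{-ηx}` is `1 - e^{-1/z}`, so self-adjointness of the Fourier transform and Fourier inversion
give `∫ e^{-1/(η + 2πis)} 𝓕⁻φ(s) ds = φ(0) - ∫₀^∞ B(x) e^{-ηx} φ(x) dx`. As `η → 0⁺` the exponential
tends to `e^{i/(2πs)}`, and self-adjointness once more identifies `∫ G_ε φ` with
`∫ e^{i/(2πs) - ε|2πs|} 𝓕⁻φ(s) ds`, whose limit as `ε → 0⁺` is therefore the required one.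

Dominated convergence justifies these limits because `B` is bounded: `B(x) = C_1(-x)` for the
Bessel–Clifford functions `C_n`, and the energy `C_n(-x)² + x C_{n+1}(-x)²` is nonincreasing, whence
`|C_n(-x)| ≤ C_n(0)` for `x ≥ 0`.
-/

open scoped FourierTransform Topology

section BesselClifford

/-- The Bessel–Clifford function `C_n`, normalised so that `x ^ (n / 2) * C_n (-x) = J_n (2 √x)`
for `x > 0`; in particular `B x = C_1 (-x)`. -/
noncomputable def besselClifford (n : ℕ) (x : ℝ) : ℝ :=
  ∑' j : ℕ, x ^ j / (j.factorial * (j + n).factorial)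

lemma norm_pow_div_factorial_mul_factorial_le (n j : ℕ) (x : ℝ) :
    ‖x ^ j / (j.factorial * (j + n).factorial : ℝ)‖ ≤ |x| ^ j / j.factorial := by
  have h_one_le : (1 : ℝ) ≤ (j + n).factorial := mod_cast (j + n).factorial_pos
  rw [norm_div, norm_pow, norm_eq_abs, norm_of_nonneg (by positivity)]
  gcongr
  exact le_mul_of_one_le_right (by positivity) h_one_le

lemma hasSum_besselClifford (n : ℕ) (x : ℝ) :
    HasSum (fun j : ℕ ↦ x ^ j / (j.factorial * (j + n).factorial : ℝ)) (besselClifford n x) :=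
  (Summable.of_norm_bounded (summable_pow_div_factorial |x|)
    (norm_pow_div_factorial_mul_factorial_le n · x)).hasSum

lemma besselClifford_zero_right (n : ℕ) : besselClifford n 0 = 1 / n.factorial := by
  rw [besselClifford, tsum_eq_single 0 fun j hj ↦ by simp [hj]]
  simp

lemma besselClifford_one_neg (x : ℝ) :
    besselClifford 1 (-x) =
      ∑' j : ℕ, (-1 : ℝ) ^ j * x ^ j / ((j.factorial : ℝ) * ((j + 1).factorial : ℝ)) :=
  tsum_congr fun j ↦ by rw [neg_pow]

lemma besselClifford_eq_inv_factorial_add (n : ℕ) (x : ℝ) :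
    besselClifford n x = 1 / n.factorial +
      ∑' j : ℕ, x ^ (j + 1) / ((j + 1).factorial * (j + 1 + n).factorial) := by
  rw [besselClifford, (hasSum_besselClifford n x).summable.tsum_eq_zero_add]
  simp

lemma hasDerivAt_besselClifford (n : ℕ) (x : ℝ) :
    HasDerivAt (besselClifford n) (besselClifford (n + 1) x) x := by
  have h_term (j : ℕ) (y : ℝ) :
      HasDerivAt (fun y ↦ y ^ (j + 1) / ((j + 1).factorial * (j + 1 + n).factorial : ℝ))
      (y ^ j / (j.factorial * (j + (n + 1)).factorial : ℝ)) y := by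
    convert! (hasDerivAt_pow (j + 1) y).div_const _ using 1
    rw [show j + (n + 1) = j + 1 + n by ring, Nat.factorial_succ j]
    push_cast
    field_simp
  have h_bound (j : ℕ) (y : ℝ) (hy : y ∈ Metric.ball (0 : ℝ) (|x| + 1)) :
      ‖y ^ j / (j.factorial * (j + (n + 1)).factorial : ℝ)‖ ≤ (|x| + 1) ^ j / j.factorial := by
    rw [mem_ball_zero_iff, norm_eq_abs] at hy
    refine (norm_pow_div_factorial_mul_factorial_le (n + 1) j y).trans ?_
    gcongr
  have h_series := hasDerivAt_tsum_of_isPreconnected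
    (summable_pow_div_factorial (|x| + 1)) Metric.isOpen_ball
    (convex_ball (0 : ℝ) (|x| + 1)).isPreconnected (fun j y _ ↦ h_term j y) h_bound
    (Metric.mem_ball_self (by positivity)) (by simp)
    (mem_ball_zero_iff.2 (lt_add_one |x|))
  rw [funext (besselClifford_eq_inv_factorial_add n)]
  exact h_series.const_add _

lemma continuous_besselClifford (n : ℕ) : Continuous (besselClifford n) :=
  continuous_iff_continuousAt.2 fun x ↦ (hasDerivAt_besselClifford n x).continuousAt

lemma besselClifford_eq_add_mul (n : ℕ) (x : ℝ) :
    besselClifford n x = (n + 1) * besselClifford (n + 1) x + x * besselClifford (n + 2) x := by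
  have h_shift : HasSum (fun j : ℕ ↦ j * (x ^ j / (j.factorial * (j + (n + 1)).factorial : ℝ)))
      (x * besselClifford (n + 2) x) := by
    rw [← hasSum_nat_add_iff' 1, Finset.sum_range_one, Nat.cast_zero, zero_mul, sub_zero]
    refine ((hasSum_besselClifford (n + 2) x).mul_left x).congr_fun fun j ↦ ?_
    rw [show j + 1 + (n + 1) = j + (n + 2) by ring, Nat.factorial_succ j, pow_succ]
    push_cast
    field_simp
  refine (hasSum_besselClifford n x).unique
    ((((hasSum_besselClifford (n + 1) x).mul_left _).add h_shift).congr_fun fun j ↦ ?_)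
  rw [← add_assoc j n 1, Nat.factorial_succ (j + n)]
  push_cast
  field_simp
  ring

lemma hasDerivAt_besselClifford_neg_sq_add_mul_sq (n : ℕ) (x : ℝ) :
    HasDerivAt (fun x ↦ besselClifford n (-x) ^ 2 + x * besselClifford (n + 1) (-x) ^ 2)
      (-(2 * n + 1) * besselClifford (n + 1) (-x) ^ 2) x := by
  have h_neg (m : ℕ) :
      HasDerivAt (fun x ↦ besselClifford m (-x)) (-besselClifford (m + 1) (-x)) x := by
    simpa [Function.comp_def] using (hasDerivAt_besselClifford m (-x)).comp x (hasDerivAt_neg x)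
  convert! ((h_neg n).pow 2).add ((hasDerivAt_id x).mul ((h_neg (n + 1)).pow 2)) using 1
  simp only [besselClifford_eq_add_mul n (-x), Nat.cast_ofNat, Nat.add_one_sub_one, pow_one,
    Pi.pow_apply, id_eq]
  ring

lemma abs_besselClifford_neg_le (n : ℕ) {x : ℝ} (hx : 0 ≤ x) :
    |besselClifford n (-x)| ≤ 1 / n.factorial := by
  have h_antitone : Antitone
      fun x ↦ besselClifford n (-x) ^ 2 + x * besselClifford (n + 1) (-x) ^ 2 :=
    antitone_of_hasDerivAt_nonpos (hasDerivAt_besselClifford_neg_sq_add_mul_sq n)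
      fun y ↦ mul_nonpos_of_nonpos_of_nonneg (by linarith [n.cast_nonneg (α := ℝ)]) (sq_nonneg _)
  refine abs_le_of_sq_le_sq ?_ (by positivity)
  calc besselClifford n (-x) ^ 2
    _ ≤ besselClifford n (-x) ^ 2 + x * besselClifford (n + 1) (-x) ^ 2 :=
      le_add_of_nonneg_right (by positivity)
    _ ≤ besselClifford n (-0) ^ 2 + 0 * besselClifford (n + 1) (-0) ^ 2 := h_antitone hx
    _ = (1 / n.factorial) ^ 2 := by simp [besselClifford_zero_right]

end BesselClifford

section Laplace

variable {z : ℂ}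

lemma norm_pow_mul_cexp_neg_mul (z : ℂ) (j : ℕ) {x : ℝ} (hx : 0 ≤ x) :
    ‖(x : ℂ) ^ j * Complex.exp (-z * x)‖ = x ^ j * exp (-(z.re * x)) := by
  simp [Complex.norm_exp, abs_of_nonneg hx]

lemma integral_norm_pow_mul_cexp_neg_mul_Ioi (hz : 0 < z.re) (j : ℕ) :
    ∫ x in Set.Ioi (0 : ℝ), ‖(x : ℂ) ^ j * Complex.exp (-z * x)‖ =
      j.factorial / z.re ^ (j + 1) := by
  have h_gamma := integral_rpow_mul_exp_neg_mul_Ioi (a := j + 1) (by positivity) hz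
  rw [Gamma_nat_eq_factorial, ← Nat.cast_succ, rpow_natCast] at h_gamma
  rw [setIntegral_congr_fun measurableSet_Ioi
    fun x hx ↦ norm_pow_mul_cexp_neg_mul z j (le_of_lt hx)]
  simpa [div_eq_inv_mul] using h_gamma

lemma integrableOn_pow_mul_cexp_neg_mul_Ioi (hz : 0 < z.re) (j : ℕ) :
    IntegrableOn (fun x : ℝ ↦ (x : ℂ) ^ j * Complex.exp (-z * x)) (Set.Ioi 0) := by
  refine (integrable_norm_iff (by fun_prop)).1 (Integrable.of_integral_ne_zero ?_)
  rw [integral_norm_pow_mul_cexp_neg_mul_Ioi hz]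
  positivity

lemma integral_pow_mul_cexp_neg_mul_Ioi (hz : 0 < z.re) (j : ℕ) :
    ∫ x in Set.Ioi (0 : ℝ), (x : ℂ) ^ j * Complex.exp (-z * x) = j.factorial / z ^ (j + 1) := by
  have hz0 : z ≠ 0 := Complex.ne_zero_of_re_pos hz
  induction j with
  | zero =>
    simpa using integral_exp_mul_complex_Ioi (a := -z) (by simpa using hz) 0
  | succ j ih =>
    have h_deriv (x : ℝ) : HasDerivAt (fun x : ℝ ↦ (x : ℂ) ^ (j + 1) * Complex.exp (-z * x))
        ((j + 1) * ((x : ℂ) ^ j * Complex.exp (-z * x)) -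
          z * ((x : ℂ) ^ (j + 1) * Complex.exp (-z * x))) x := by
      convert! ((hasDerivAt_pow (j + 1) (x : ℂ)).mul
        (((hasDerivAt_id (x : ℂ)).const_mul (-z)).cexp)).comp_ofReal using 1
      simp only [Nat.cast_add, Nat.cast_one, add_tsub_cancel_right, id_eq]
      ring
    have h_int := (integrableOn_pow_mul_cexp_neg_mul_Ioi hz j).const_mul (j + 1 : ℂ)
    have h_int_succ := integrableOn_pow_mul_cexp_neg_mul_Ioi hz (j + 1)
    have h_parts := integral_Ioi_of_hasDerivAt_of_tendsto' (fun x _ ↦ h_deriv x)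
      (h_int.sub (h_int_succ.const_mul z))
      (tendsto_zero_of_hasDerivAt_of_integrableOn_Ioi (a := 0) (fun x _ ↦ h_deriv x)
        (h_int.sub (h_int_succ.const_mul z)) h_int_succ)
    rw [integral_sub h_int (h_int_succ.const_mul z), integral_const_mul, integral_const_mul, ih,
      Complex.ofReal_zero, zero_pow j.succ_ne_zero, zero_mul, sub_zero, sub_eq_zero] at h_parts
    rw [← mul_right_inj' hz0, ← h_parts, Nat.factorial_succ]
    push_cast
    field_simp
    ring

lemma integral_besselClifford_one_neg_mul_cexp_neg_mul_Ioi (hz : 0 < z.re) :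
    ∫ x in Set.Ioi (0 : ℝ), (besselClifford 1 (-x) : ℂ) * Complex.exp (-z * x) =
      1 - Complex.exp (-z⁻¹) := by
  set c : ℕ → ℂ := fun j ↦ (-1) ^ j / (j.factorial * (j + 1).factorial) with hc
  have h_series (x : ℝ) : (besselClifford 1 (-x) : ℂ) * Complex.exp (-z * x) =
      ∑' j, c j * (x ^ j * Complex.exp (-z * x)) := by
    rw [besselClifford_one_neg, Complex.ofReal_tsum, ← tsum_mul_right]
    congr! 2 with j
    rw [hc]
    push_cast
    ring
  have h_summable : Summable fun j ↦
      ∫ x in Set.Ioi (0 : ℝ), ‖c j * ((x : ℂ) ^ j * Complex.exp (-z * x))‖ := by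
    have h_exp := (summable_nat_add_iff 1).2 (summable_pow_div_factorial z.re⁻¹)
    refine h_exp.congr fun j ↦ ?_
    simp_rw [norm_mul (c j), integral_const_mul, integral_norm_pow_mul_cexp_neg_mul_Ioi hz]
    simp only [hc, norm_div, norm_mul, norm_pow, norm_neg, norm_one, one_pow, RCLike.norm_natCast,
      inv_pow]
    field_simp
  have h_exp : HasSum (fun j : ℕ ↦ -((-z⁻¹) ^ (j + 1) / (j + 1).factorial))
      (1 - Complex.exp (-z⁻¹)) := by
    have h := NormedSpace.expSeries_div_hasSum_exp (-z⁻¹)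
    rw [← Complex.exp_eq_exp_ℂ, ← hasSum_nat_add_iff' 1] at h
    simpa using h.neg
  simp_rw [h_series]
  refine (hasSum_integral_of_summable_integral_norm
    (fun j ↦ (integrableOn_pow_mul_cexp_neg_mul_Ioi hz j).const_mul (c j)) h_summable).unique
    (h_exp.congr_fun fun j ↦ ?_)
  rw [integral_const_mul, integral_pow_mul_cexp_neg_mul_Ioi hz, hc, neg_pow z⁻¹, inv_pow]
  have : (j.factorial : ℂ) ≠ 0 := mod_cast j.factorial_ne_zero
  field_simp
  ring

end Laplace

section Fourier

variable {V F : Type*} [NormedAddCommGroup V] [InnerProductSpace ℝ V] [FiniteDimensional ℝ V]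
  [MeasurableSpace V] [BorelSpace V] [NormedAddCommGroup F] [NormedSpace ℂ F]
  {f : V → ℂ} {g : V → F}

lemma integrable_fourierInv (hg : Integrable (𝓕 g)) : Integrable (𝓕⁻ g) := by
  rw [funext (fourierInv_eq_fourier_neg g)]
  exact hg.comp_neg

variable [CompleteSpace F]

lemma integral_fourier_smul_eq_integral_smul_fourier (hf : Integrable f) (hg : Integrable g) :
    ∫ ξ, 𝓕 f ξ • g ξ = ∫ x, f x • 𝓕 g x := by
  simpa using! VectorFourier.integral_fourierIntegral_smul_eq_flip (L := innerₗ V)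
    Real.continuous_fourierChar continuous_inner hf hg

lemma integral_fourierInv_smul_eq_integral_smul_fourierInv
    (hf : Integrable f) (hg : Integrable g) :
    ∫ ξ, 𝓕⁻ f ξ • g ξ = ∫ x, f x • 𝓕⁻ g x := by
  rw [fourierInv_eq_fourier_comp_neg,
    integral_fourier_smul_eq_integral_smul_fourier hf.comp_neg hg, ← integral_neg_eq_self]
  simp [fourierInv_eq_fourier_neg]

lemma integral_fourierInv_eq_apply_zero (hg : Integrable g) (hg' : Integrable (𝓕 g))
    (hg0 : ContinuousAt g 0) : ∫ ξ, 𝓕⁻ g ξ = g 0 := by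
  rw [← hg.fourier_fourierInv_eq hg' hg0]
  simp [fourier_eq]

end Fourier

lemma fourierInv_comp_two_pi_mul {E : Type*} [NormedAddCommGroup E] [NormedSpace ℂ E]
    (h : ℝ → E) (x : ℝ) :
    𝓕⁻ (fun s ↦ h (2 * π * s)) x =
      (1 / (2 * π) : ℝ) • ∫ t : ℝ, Complex.exp (Complex.I * t * x) • h t := by
  have h_scale := Measure.integral_comp_mul_left
    (fun t : ℝ ↦ Complex.exp (Complex.I * t * x) • h t) (2 * π)
  rw [abs_of_pos (by positivity), inv_eq_one_div] at h_scale
  rw [← h_scale, fourierInv_eq']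
  congr! 3 with s
  simp only [RCLike.inner_apply, ringHom_apply, Complex.ofReal_mul, Complex.ofReal_ofNat]
  ring_nf

lemma tendsto_integral_mul_of_norm_le_const {ι α A : Type*} [MeasurableSpace α] {μ : Measure α}
    [NormedRing A] [NormedSpace ℝ A] {l : Filter ι} [l.IsCountablyGenerated]
    {m : ι → α → A} {m₀ f : α → A} (C : ℝ)
    (hm : ∀ᶠ i in l, AEStronglyMeasurable (m i) μ) (h_bound : ∀ᶠ i in l, ∀ᵐ a ∂μ, ‖m i a‖ ≤ C)
    (hf : Integrable f μ) (h_lim : ∀ᵐ a ∂μ, Tendsto (m · a) l (𝓝 (m₀ a))) :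
    Tendsto (fun i ↦ ∫ a, m i a * f a ∂μ) l (𝓝 (∫ a, m₀ a * f a ∂μ)) := by
  refine tendsto_integral_filter_of_dominated_convergence (fun a ↦ C * ‖f a‖) ?_ ?_
    (hf.norm.const_mul C) ?_
  · filter_upwards [hm] with i hi using hi.mul hf.aestronglyMeasurable
  · filter_upwards [h_bound] with i hi
    filter_upwards [hi] with a ha
    exact (norm_mul_le _ _).trans (by gcongr)
  · filter_upwards [h_lim] with a ha using ha.mul_const _

section Regularization

variable {ε η : ℝ} {φ : ℝ → ℂ}

/-- The kernel `1_{ℝ₊}(x) B(x) e^{-ηx}`, integrable for `η > 0`. At `η = 0` it is, up to sign, the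
function part of the distributional Fourier transform of `e^{i/t}`. -/
noncomputable def dampedBessel (η : ℝ) : ℝ → ℂ :=
  (Set.Ioi 0).indicator fun x ↦ besselClifford 1 (-x) * Complex.exp (-η * x)

lemma norm_besselClifford_one_neg_mul_cexp_le {x : ℝ} (hx : 0 ≤ x) (η : ℝ) :
    ‖(besselClifford 1 (-x) : ℂ) * Complex.exp (-η * x)‖ ≤ exp (-η * x) := by
  have h_bessel := abs_besselClifford_neg_le 1 hx
  rw [Nat.factorial_one, Nat.cast_one, div_one] at h_bessel
  simpa [Complex.norm_exp] using mul_le_of_le_one_left (exp_pos (-η * x)).le h_bessel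

lemma norm_dampedBessel_le_one (hη : 0 ≤ η) (x : ℝ) : ‖dampedBessel η x‖ ≤ 1 := by
  by_cases hx : x ∈ Set.Ioi 0
  · rw [dampedBessel, Set.indicator_of_mem hx]
    refine (norm_besselClifford_one_neg_mul_cexp_le (le_of_lt hx) η).trans (exp_le_one_iff.2 ?_)
    rw [neg_mul, neg_nonpos]
    exact mul_nonneg hη (le_of_lt hx)
  · simp [dampedBessel, hx]

lemma aestronglyMeasurable_dampedBessel (η : ℝ) : AEStronglyMeasurable (dampedBessel η) := by
  have h_cont := continuous_besselClifford 1
  exact Continuous.aestronglyMeasurable (by fun_prop) |>.indicator measurableSet_Ioi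

lemma integrable_dampedBessel (hη : 0 < η) : Integrable (dampedBessel η) := by
  have h_cont := continuous_besselClifford 1
  refine (integrable_indicator_iff measurableSet_Ioi).2 <|
    (integrableOn_exp_mul_Ioi (neg_lt_zero.2 hη) 0).mono'
      (Continuous.aestronglyMeasurable (by fun_prop)) ?_
  filter_upwards [ae_restrict_mem measurableSet_Ioi] with x hx
  exact norm_besselClifford_one_neg_mul_cexp_le (le_of_lt hx) η

lemma integral_dampedBessel_zero_mul (φ : ℝ → ℂ) :
    ∫ x, dampedBessel 0 x * φ x = ∫ x in Set.Ioi 0, (besselClifford 1 (-x) : ℂ) * φ x := by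
  simp_rw [dampedBessel, ← Set.indicator_mul_left]
  rw [integral_indicator measurableSet_Ioi]
  simp

lemma fourier_dampedBessel (hη : 0 < η) (s : ℝ) :
    𝓕 (dampedBessel η) s = 1 - Complex.exp (-(η + 2 * π * s * Complex.I)⁻¹) := by
  rw [← integral_besselClifford_one_neg_mul_cexp_neg_mul_Ioi (by simpa using hη),
    ← integral_indicator measurableSet_Ioi, fourier_real_eq_integral_exp_smul]
  congr 1 with x
  by_cases hx : x ∈ Set.Ioi 0
  · simp only [dampedBessel, Set.indicator_of_mem hx, smul_eq_mul]
    rw [mul_left_comm, ← Complex.exp_add]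
    push_cast
    ring_nf
  · simp [dampedBessel, hx]

lemma norm_cexp_neg_inv_le_one {z : ℂ} (hz : 0 ≤ z.re) : ‖Complex.exp (-z⁻¹)‖ ≤ 1 := by
  rw [Complex.norm_exp, exp_le_one_iff, Complex.neg_re, neg_nonpos, Complex.inv_re]
  exact div_nonneg hz (Complex.normSq_nonneg z)

lemma integral_cexp_neg_inv_mul_fourierInv (hη : 0 < η) (hφ : Continuous φ)
    (hφ_int : Integrable φ) (hφ_fourier : Integrable (𝓕 φ)) :
    ∫ s : ℝ, Complex.exp (-(η + 2 * π * s * Complex.I)⁻¹) * 𝓕⁻ φ s =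
      φ 0 - ∫ x, dampedBessel η x * φ x := by
  have h_inv := integrable_fourierInv hφ_fourier
  have h_fourier_mul : Integrable fun s ↦ 𝓕 (dampedBessel η) s * 𝓕⁻ φ s := by
    simp_rw [fourier_dampedBessel hη, sub_mul, one_mul]
    exact h_inv.sub <| h_inv.bdd_mul (c := 1) (by fun_prop)
      (ae_of_all _ fun s ↦ norm_cexp_neg_inv_le_one (by simpa using hη.le))
  calc ∫ s : ℝ, Complex.exp (-(η + 2 * π * s * Complex.I)⁻¹) * 𝓕⁻ φ s
    _ = ∫ s, (𝓕⁻ φ s - 𝓕 (dampedBessel η) s * 𝓕⁻ φ s) := by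
      congr 1 with s
      rw [fourier_dampedBessel hη]
      ring
    _ = (∫ s, 𝓕⁻ φ s) - ∫ s, 𝓕 (dampedBessel η) s * 𝓕⁻ φ s := integral_sub h_inv h_fourier_mul
    _ = φ 0 - ∫ x, dampedBessel η x * 𝓕 (𝓕⁻ φ) x := by
      rw [integral_fourierInv_eq_apply_zero hφ_int hφ_fourier hφ.continuousAt]
      simpa using integral_fourier_smul_eq_integral_smul_fourier (integrable_dampedBessel hη) h_inv
    _ = φ 0 - ∫ x, dampedBessel η x * φ x := by
      rw [hφ.fourier_fourierInv_eq hφ_int hφ_fourier]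

lemma tendsto_integral_dampedBessel_mul (hφ : Integrable φ) :
    Tendsto (fun η ↦ ∫ x, dampedBessel η x * φ x) (𝓝[>] 0)
      (𝓝 (∫ x in Set.Ioi 0, (besselClifford 1 (-x) : ℂ) * φ x)) := by
  rw [← integral_dampedBessel_zero_mul]
  refine tendsto_integral_mul_of_norm_le_const 1
    (Eventually.of_forall aestronglyMeasurable_dampedBessel) ?_ hφ (ae_of_all _ fun x ↦ ?_)
  · filter_upwards [self_mem_nhdsWithin] with η hη
    exact ae_of_all _ (norm_dampedBessel_le_one (le_of_lt hη))
  · have h_cont : Continuous (dampedBessel · x) := by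
      by_cases hx : x ∈ Set.Ioi 0
      · simp only [dampedBessel, Set.indicator_of_mem hx]
        fun_prop
      · simpa only [dampedBessel, Set.indicator_of_notMem hx] using continuous_const
    exact (h_cont.tendsto 0).mono_left nhdsWithin_le_nhds

lemma tendsto_cexp_neg_inv_nhdsGT_zero {t : ℝ} (ht : t ≠ 0) :
    Tendsto (fun η : ℝ ↦ Complex.exp (-(η + t * Complex.I)⁻¹)) (𝓝[>] 0)
      (𝓝 (Complex.exp (Complex.I / t))) := by
  have h_ne : ((0 : ℝ) : ℂ) + t * Complex.I ≠ 0 := by simpa using ht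
  have h_cont : ContinuousAt (fun η : ℝ ↦ Complex.exp (-(η + t * Complex.I)⁻¹)) 0 := by
    fun_prop (disch := assumption)
  convert! h_cont.tendsto.mono_left nhdsWithin_le_nhds using 3
  simp [div_eq_mul_inv]

lemma integral_cexp_I_div_mul_fourierInv (hφ : Continuous φ) (hφ_int : Integrable φ)
    (hφ_fourier : Integrable (𝓕 φ)) :
    ∫ s : ℝ, Complex.exp (Complex.I / (2 * π * s : ℝ)) * 𝓕⁻ φ s =
      φ 0 - ∫ x in Set.Ioi 0, (besselClifford 1 (-x) : ℂ) * φ x := by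
  have h_lim : Tendsto
      (fun η : ℝ ↦ ∫ s : ℝ, Complex.exp (-(η + 2 * π * s * Complex.I)⁻¹) * 𝓕⁻ φ s) (𝓝[>] 0)
      (𝓝 (∫ s : ℝ, Complex.exp (Complex.I / (2 * π * s : ℝ)) * 𝓕⁻ φ s)) := by
    refine tendsto_integral_mul_of_norm_le_const 1 (Eventually.of_forall fun η ↦ by fun_prop) ?_
      (integrable_fourierInv hφ_fourier) ?_
    · filter_upwards [self_mem_nhdsWithin] with η hη
      exact ae_of_all _ fun s ↦ norm_cexp_neg_inv_le_one (by simpa using le_of_lt hη)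
    · filter_upwards [Measure.ae_ne volume (0 : ℝ)] with s hs
      simpa using tendsto_cexp_neg_inv_nhdsGT_zero (mul_ne_zero two_pi_pos.ne' hs)
  refine tendsto_nhds_unique h_lim
    (((tendsto_integral_dampedBessel_mul hφ_int).const_sub (φ 0)).congr' ?_)
  filter_upwards [self_mem_nhdsWithin] with η hη
  exact (integral_cexp_neg_inv_mul_fourierInv hη hφ hφ_int hφ_fourier).symm

lemma integrable_exp_neg_mul_abs (hε : 0 < ε) : Integrable fun t : ℝ ↦ exp (-ε * |t|) := by
  simpa using (integrable_fun_norm_addHaar (volume : Measure ℝ) (f := fun t ↦ exp (-ε * t))).2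
    (by simpa using integrableOn_exp_mul_Ioi (neg_lt_zero.2 hε) 0)

/-- The damped symbol `e^{i/t - ε|t|}`, integrable for `ε > 0`. At `t = 0` the convention
`x / 0 = 0` gives it the value `1`. -/
noncomputable def dampedSymbol (ε t : ℝ) : ℂ :=
  Complex.exp (Complex.I / t - ε * |t|)

lemma norm_dampedSymbol (ε t : ℝ) : ‖dampedSymbol ε t‖ = exp (-ε * |t|) := by
  simp [dampedSymbol, Complex.norm_exp, Complex.div_re]

lemma measurable_dampedSymbol (ε : ℝ) : Measurable (dampedSymbol ε) := by
  unfold dampedSymbol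
  fun_prop

lemma integrable_dampedSymbol (hε : 0 < ε) : Integrable (dampedSymbol ε) :=
  (integrable_exp_neg_mul_abs hε).mono' (measurable_dampedSymbol ε).aestronglyMeasurable
    (ae_of_all _ fun t ↦ (norm_dampedSymbol ε t).le)

lemma cexp_I_div_add_sub_eq (ε t x : ℝ) :
    Complex.exp (Complex.I / t + Complex.I * t * x - ε * |t|) =
      Complex.exp (Complex.I * t * x) * dampedSymbol ε t := by
  rw [dampedSymbol, ← Complex.exp_add]
  ring_nf

lemma integrable_cexp_I_div_add_sub (hε : 0 < ε) (x : ℝ) :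
    Integrable fun t : ℝ ↦
      Complex.exp (Complex.I / t + Complex.I * t * x - ε * |t|) := by
  simp_rw [cexp_I_div_add_sub_eq]
  exact (integrable_dampedSymbol hε).bdd_mul (c := 1) (by fun_prop)
    (ae_of_all _ fun t ↦ by simp [Complex.norm_exp])

lemma integral_integral_cexp_I_div_add_sub_mul (hε : 0 < ε) (hφ : Integrable φ) :
    ∫ x : ℝ, ((1 / (2 * π) : ℝ) : ℂ) *
        (∫ t : ℝ, Complex.exp (Complex.I / t + Complex.I * t * x - ε * |t|)) * φ x =
      ∫ s : ℝ, dampedSymbol ε (2 * π * s) * 𝓕⁻ φ s := by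
  have h_kernel (x : ℝ) : ((1 / (2 * π) : ℝ) : ℂ) *
      (∫ t : ℝ, Complex.exp (Complex.I / t + Complex.I * t * x - ε * |t|)) =
        𝓕⁻ (fun s ↦ dampedSymbol ε (2 * π * s)) x := by
    simp_rw [cexp_I_div_add_sub_eq, fourierInv_comp_two_pi_mul, Complex.real_smul, smul_eq_mul]
  simp_rw [h_kernel]
  exact integral_fourierInv_smul_eq_integral_smul_fourierInv
    ((integrable_dampedSymbol hε).comp_mul_left' two_pi_pos.ne') hφ

lemma tendsto_integral_dampedSymbol_mul {f : ℝ → ℂ} (hf : Integrable f) :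
    Tendsto (fun ε ↦ ∫ s, dampedSymbol ε (2 * π * s) * f s) (𝓝[>] 0)
      (𝓝 (∫ s : ℝ, Complex.exp (Complex.I / (2 * π * s : ℝ)) * f s)) := by
  refine tendsto_integral_mul_of_norm_le_const 1 (Eventually.of_forall fun ε ↦
    ((measurable_dampedSymbol ε).comp (by fun_prop)).aestronglyMeasurable) ?_ hf
    (ae_of_all _ fun s ↦ ?_)
  · filter_upwards [self_mem_nhdsWithin] with ε hε
    refine ae_of_all _ fun s ↦ ?_
    rw [norm_dampedSymbol, exp_le_one_iff, neg_mul, neg_nonpos]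
    exact mul_nonneg (le_of_lt hε) (abs_nonneg _)
  · have h_cont : Continuous (dampedSymbol · (2 * π * s)) := by
      unfold dampedSymbol
      fun_prop
    simpa [dampedSymbol] using (h_cont.tendsto 0).mono_left nhdsWithin_le_nhds

end Regularization

theorem stmt_9_general :
    (∀ ε : ℝ, 0 < ε → ∀ x : ℝ,
      Integrable (fun t : ℝ =>
        Complex.exp (Complex.I / t + Complex.I * t * x - ε * |t|))) ∧
    (∀ φ : ℝ → ℂ, Continuous φ → Integrable φ → Integrable (𝓕 φ) →
      Tendsto
        (fun ε : ℝ => ∫ x : ℝ,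
          ((1 / (2 * π) : ℝ) : ℂ) *
            (∫ t : ℝ, Complex.exp (Complex.I / t + Complex.I * t * x - ε * |t|)) * φ x)
        (nhdsWithin 0 (Set.Ioi 0))
        (nhds (φ 0 - ∫ x in Set.Ioi (0:ℝ),
          ((∑' j : ℕ, (-1 : ℝ) ^ j * x ^ j /
            ((j.factorial : ℝ) * ((j + 1).factorial : ℝ)) : ℝ) : ℂ) * φ x))) := by
  refine ⟨fun ε hε x ↦ integrable_cexp_I_div_add_sub hε x, fun φ hφ hφ_int hφ_fourier ↦ ?_⟩
  have h_lim := tendsto_integral_dampedSymbol_mul (integrable_fourierInv hφ_fourier)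
  rw [integral_cexp_I_div_mul_fourierInv hφ hφ_int hφ_fourier] at h_lim
  simp_rw [besselClifford_one_neg] at h_lim
  refine h_lim.congr' ?_
  filter_upwards [self_mem_nhdsWithin] with ε hε
  exact (integral_integral_cexp_I_div_add_sub_mul hε hφ_int).symm

/-- The distributional Fourier transform of `t ↦ e^{i/t}` equals
`δ₀(x) - 1_{ℝ₊}(x) x^{-1/2} J₁(2√x)`. -/
theorem stmt_9 :
    (∀ ε : ℝ, 0 < ε → ∀ x : ℝ,
      Integrable (fun t : ℝ =>
        Complex.exp (Complex.I / t + Complex.I * t * x - ε * |t|))) ∧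
    (∀ φ : ℝ → ℂ, ContDiff ℝ (⊤ : ℕ∞) φ → HasCompactSupport φ →
      Tendsto
        (fun ε : ℝ => ∫ x : ℝ,
          ((1 / (2 * π) : ℝ) : ℂ) *
            (∫ t : ℝ, Complex.exp (Complex.I / t + Complex.I * t * x - ε * |t|)) * φ x)
        (nhdsWithin 0 (Set.Ioi 0))
        (nhds (φ 0 - ∫ x in Set.Ioi (0:ℝ),
          ((∑' j : ℕ, (-1 : ℝ) ^ j * x ^ j /
            ((j.factorial : ℝ) * ((j + 1).factorial : ℝ)) : ℝ) : ℂ) * φ x))) := by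
  refine ⟨stmt_9_general.1, fun φ hφ hc ↦ stmt_9_general.2 φ hφ.continuous
    (hφ.continuous.integrable_of_hasCompactSupport hc) ?_⟩
  simpa using (𝓕 (hc.toSchwartzMap hφ)).integrable (μ := volume)
end
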